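/- Let n ≥ 1, let j ∈ {1,…,n}, let x = (x₁,…,xₙ) ∈ ℂⁿ with xⱼ ≠ 0, set x₀ = 1, and let y = (y₁,…,yₙ) ∈ ℂⁿ. Define φ : ℂ∖{0} → ℂⁿ × ℂⁿ whose first factor has the n coordinates t^{j−i} xᵢ / xⱼ for i ∈ {0,1,…,n}∖{j}, and whose second factor has the n coordinates (−t^{−j} xⱼ · Σ_{i=1}^{n} xᵢyᵢ) together with t^{i−j} xⱼ yᵢ for i ∈ {1,…,n}∖{j}. Then φ(t) tends to ((0,…,0),(0,…,0)) as t → 0 along nonzero values of t if and only if xᵢ = 0 for all i with j < i ≤ n and yᵢ = 0 for all i with 1 ≤ i ≤ j. (This computes the stable manifold Lⱼ of the fixed point eⱼ of the Hamiltonian torus action on T*ℙⁿ in the chart Vⱼ, giving Lⱼ ≅ ⊕_{i=1}^{n−j} O_{ℙʲ}(−1).) -/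

import Mathlib

open Filter Topology

/-!
A monomial `t ^ k • c` tends to `0` as `t → 0` exactly when `k > 0` or `c = 0`. In the chart `Vⱼ`
the base coordinates of negative weight therefore force `xᵢ = 0` for `i > j`, and the fibre
coordinates of negative weight force `yᵢ = 0` for `1 ≤ i < j`. After that the pairing `∑ xᵢ yᵢ`
reduces to `xⱼ yⱼ`; it is, up to the factor `-xⱼ`, the coefficient of `t ^ (-j)` in the remaining
fibre coordinate, so `yⱼ = 0` as well.
-/

section Monomial

variable {G E : Type*} [GroupWithZero G] [TopologicalSpace G] [ContinuousMul G]
  [Zero E] [MulActionWithZero G E] [TopologicalSpace E] [ContinuousSMul G E]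

theorem tendsto_zpow_smul_nhdsNE_zero {k : ℤ} (hk : 0 < k) (c : E) :
    Tendsto (fun t : G => t ^ k • c) (𝓝[≠] 0) (𝓝 0) := by
  lift k to ℕ using hk.le
  have hk₀ : k ≠ 0 := by lia
  have hcont : Continuous fun t : G => t ^ k • c := by fun_prop
  simpa [hk₀] using (hcont.tendsto 0).mono_left nhdsWithin_le_nhds

variable [T1Space E] [(𝓝[≠] (0 : G)).NeBot]

theorem eq_zero_of_tendsto_zpow_smul_nhdsNE_zero {k : ℤ} (hk : k ≤ 0) {c : E}
    (h : Tendsto (fun t : G => t ^ k • c) (𝓝[≠] 0) (𝓝 0)) : c = 0 := by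
  obtain ⟨m, rfl⟩ := Int.exists_eq_neg_ofNat hk
  have hpow : Tendsto (fun t : G => t ^ m) (𝓝[≠] 0) (𝓝 (0 ^ m)) :=
    ((continuous_pow m).tendsto 0).mono_left nhdsWithin_le_nhds
  have hcancel : (fun t : G => t ^ m • t ^ (-(m : ℤ)) • c) =ᶠ[𝓝[≠] 0] fun _ => c := by
    filter_upwards [self_mem_nhdsWithin] with t ht
    rw [zpow_neg, zpow_natCast, smul_inv_smul₀ (pow_ne_zero m ht)]
  have hconst : Tendsto (fun _ : G => c) (𝓝[≠] 0) (𝓝 0) := by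
    simpa using (hpow.smul h).congr' hcancel
  exact tendsto_const_nhds_iff.mp hconst

theorem tendsto_zpow_smul_nhdsNE_zero_iff {k : ℤ} {c : E} :
    Tendsto (fun t : G => t ^ k • c) (𝓝[≠] 0) (𝓝 0) ↔ 0 < k ∨ c = 0 := by
  refine ⟨fun h => ?_, ?_⟩
  · exact (lt_or_ge 0 k).imp_right fun hk => eq_zero_of_tendsto_zpow_smul_nhdsNE_zero hk h
  · rintro (hk | rfl)
    · exact tendsto_zpow_smul_nhdsNE_zero hk c
    · simp

end Monomial

theorem sum_Icc_mul_eq_single {R : Type*} [NonUnitalNonAssocSemiring R] {m n j : ℕ} {x y : ℕ → R}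
    (hj : j ∈ Finset.Icc m n) (hx : ∀ i, j < i → i ≤ n → x i = 0)
    (hy : ∀ i, m ≤ i → i < j → y i = 0) : ∑ i ∈ Finset.Icc m n, x i * y i = x j * y j := by
  refine Finset.sum_eq_single_of_mem j hj fun i hi hij => ?_
  obtain ⟨hmi, hin⟩ := Finset.mem_Icc.mp hi
  rcases hij.lt_or_gt with hlt | hgt
  · rw [hy i hmi hlt, mul_zero]
  · rw [hx i hgt hin, zero_mul]

section Coordinates

variable {G : Type*} [GroupWithZero G] [TopologicalSpace G] [ContinuousMul G] [T1Space G]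
  [(𝓝[≠] (0 : G)).NeBot]

theorem tendsto_zpow_mul_nhdsNE_zero_iff {k : ℤ} {c : G} :
    Tendsto (fun t : G => t ^ k * c) (𝓝[≠] 0) (𝓝 0) ↔ 0 < k ∨ c = 0 :=
  tendsto_zpow_smul_nhdsNE_zero_iff

theorem tendsto_base_coord_iff {i j : ℕ} {a b : G} (hij : i ≠ j) (hb : b ≠ 0) :
    Tendsto (fun t : G => t ^ ((j : ℤ) - (i : ℤ)) * a / b) (𝓝[≠] 0) (𝓝 0) ↔ (j < i → a = 0) := by
  simp only [mul_div_assoc, tendsto_zpow_mul_nhdsNE_zero_iff, div_eq_zero_iff, hb, or_false]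
  grind

theorem tendsto_fibre_coord_iff {i j : ℕ} {a b : G} (hij : i ≠ j) (ha : a ≠ 0) :
    Tendsto (fun t : G => t ^ ((i : ℤ) - (j : ℤ)) * a * b) (𝓝[≠] 0) (𝓝 0) ↔ (i < j → b = 0) := by
  simp only [mul_assoc, tendsto_zpow_mul_nhdsNE_zero_iff, mul_eq_zero, ha, false_or]
  grind

end Coordinates

section StableManifold

variable {K : Type*} [DivisionRing K] [TopologicalSpace K] [ContinuousMul K] [T1Space K]
  [(𝓝[≠] (0 : K)).NeBot]

theorem tendsto_pairing_coord_iff {j : ℕ} {a s : K} (ha : a ≠ 0) :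
    Tendsto (fun t : K => -(t ^ (-(j : ℤ))) * a * s) (𝓝[≠] 0) (𝓝 0) ↔ s = 0 := by
  have hmono (t : K) : -(t ^ (-(j : ℤ))) * a * s = t ^ (-(j : ℤ)) * -(a * s) := by
    rw [neg_mul, neg_mul, mul_neg, mul_assoc]
  have hweight : ¬ 0 < -(j : ℤ) := by lia
  simp only [hmono, tendsto_zpow_mul_nhdsNE_zero_iff, hweight, false_or, neg_eq_zero, mul_eq_zero,
    ha]

theorem stable_manifold_ej_general {n j : ℕ} (hjn : j ≤ n) {x y : ℕ → K} (hxj : x j ≠ 0) :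
    ((∀ i : ℕ, i ≤ n → i ≠ j →
        Tendsto (fun t : K => t ^ ((j : ℤ) - (i : ℤ)) * x i / x j) (𝓝[≠] 0) (𝓝 0)) ∧
      Tendsto (fun t : K => -(t ^ (-(j : ℤ))) * x j * ∑ i ∈ Finset.Icc 1 n, x i * y i)
        (𝓝[≠] 0) (𝓝 0) ∧
      (∀ i : ℕ, 1 ≤ i → i ≤ n → i ≠ j →
        Tendsto (fun t : K => t ^ ((i : ℤ) - (j : ℤ)) * x j * y i) (𝓝[≠] 0) (𝓝 0)))
    ↔ ((∀ i : ℕ, j < i → i ≤ n → x i = 0) ∧ (∀ i : ℕ, 1 ≤ i → i ≤ j → y i = 0)) := by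
  rw [tendsto_pairing_coord_iff hxj]
  constructor
  · rintro ⟨hbase, hsum, hfibre⟩
    have hx (i : ℕ) (hji : j < i) (hin : i ≤ n) : x i = 0 :=
      (tendsto_base_coord_iff hji.ne' hxj).mp (hbase i hin hji.ne') hji
    have hy (i : ℕ) (hi : 1 ≤ i) (hij : i < j) : y i = 0 :=
      (tendsto_fibre_coord_iff hij.ne hxj).mp (hfibre i hi (hij.le.trans hjn) hij.ne) hij
    refine ⟨hx, fun i hi hij => hij.lt_or_eq.elim (hy i hi) ?_⟩
    rintro rfl
    rw [sum_Icc_mul_eq_single (Finset.mem_Icc.mpr ⟨hi, hjn⟩) hx hy] at hsum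
    exact (mul_eq_zero.mp hsum).resolve_left hxj
  · rintro ⟨hx, hy⟩
    refine ⟨fun i hin hij => (tendsto_base_coord_iff hij hxj).mpr fun hji => hx i hji hin,
      Finset.sum_eq_zero fun i hi => ?_,
      fun i hi _ hij => (tendsto_fibre_coord_iff hij hxj).mpr fun hlt => hy i hi hlt.le⟩
    obtain ⟨h1i, hin⟩ := Finset.mem_Icc.mp hi
    rcases le_or_gt i j with hij | hji
    · rw [hy i h1i hij, mul_zero]
    · rw [hx i hji hin, zero_mul]

end StableManifold

/-- The stable manifold of the fixed point `eⱼ` of the Hamiltonian torus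
action on `T*ℙⁿ`, computed in the chart `Vⱼ` (here `x₀ = 1` and `xⱼ ≠ 0`).  Convergence of
the orbit `φ(t)` to the origin of the chart is stated coordinatewise (which is equivalent
to convergence in the finite product): the base coordinates are `t^(j-i) xᵢ/xⱼ` for
`i ∈ {0,…,n} \ {j}`, and the fibre coordinates are `-t^(-j) xⱼ ∑_{i=1}^n xᵢyᵢ` together
with `t^(i-j) xⱼ yᵢ` for `i ∈ {1,…,n} \ {j}`.  The limit is `0` iff `xᵢ = 0` for
`j < i ≤ n` and `yᵢ = 0` for `1 ≤ i ≤ j`. -/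
theorem stable_manifold_ej (n : ℕ) (hn : 1 ≤ n) (j : ℕ) (hj1 : 1 ≤ j) (hjn : j ≤ n)
    (x y : ℕ → ℂ) (hx0 : x 0 = 1) (hxj : x j ≠ 0) :
    ((∀ i : ℕ, i ≤ n → i ≠ j →
        Tendsto (fun t : ℂ => t ^ ((j : ℤ) - (i : ℤ)) * x i / x j) (𝓝[≠] (0 : ℂ)) (𝓝 0)) ∧
      Tendsto (fun t : ℂ => -(t ^ (-(j : ℤ))) * x j * ∑ i ∈ Finset.Icc 1 n, x i * y i)
        (𝓝[≠] (0 : ℂ)) (𝓝 0) ∧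
      (∀ i : ℕ, 1 ≤ i → i ≤ n → i ≠ j →
        Tendsto (fun t : ℂ => t ^ ((i : ℤ) - (j : ℤ)) * x j * y i) (𝓝[≠] (0 : ℂ)) (𝓝 0)))
    ↔ ((∀ i : ℕ, j < i → i ≤ n → x i = 0) ∧ (∀ i : ℕ, 1 ≤ i → i ≤ j → y i = 0)) :=
  stable_manifold_ej_general hjn hxj
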